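/- Let R = (0,3) × (−π/2, π/2) in the (σ,θ)-plane, and for 0 < r < π/2 define Ω_r = R \ {(σ,θ) : σ² + (θ − π/2)² ≤ r²} and Ω_{r,r} = Ω_r \ {(σ,θ) : σ² + (θ + π/2)² ≤ r²}. There exists a constant C > 0, independent of r, such that for every 0 < r < π/2, for each Ω ∈ {Ω_r, Ω_{r,r}}, and for every continuously differentiable function u on the closure of Ω, one has ∫_{{σ=0} ∩ ∂Ω} u(0,θ)² dθ ≤ C · ∫_Ω ( |u| · |∇u| + u² ) dσ dθ, where the left-hand integral is over those θ ∈ (−π/2, π/2) with (0,θ) ∈ ∂Ω. -/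

import Mathlib

open MeasureTheory

/-- The open rectangle `R = (0,3) × (-π/2, π/2)` in the `(σ,θ)`-plane. -/
def Rrect : Set (ℝ × ℝ) := Set.Ioo (0 : ℝ) 3 ×ˢ Set.Ioo (-(Real.pi / 2)) (Real.pi / 2)

/-- The once-perforated rectangle `Ω_r`. -/
def OmegaR (r : ℝ) : Set (ℝ × ℝ) :=
  Rrect \ {p | p.1 ^ 2 + (p.2 - Real.pi / 2) ^ 2 ≤ r ^ 2}

/-- The twice-perforated rectangle `Ω_{r,r}`. -/
def OmegaRR (r : ℝ) : Set (ℝ × ℝ) :=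
  OmegaR r \ {p | p.1 ^ 2 + (p.2 + Real.pi / 2) ^ 2 ≤ r ^ 2}

/-!
On a horizontal segment `(0, 3) × {θ}` contained in `Ω`, the function `u² (σ / 3 - 1)` vanishes at
`σ = 3` and equals `-u(0, θ)²` at `σ = 0`, so `u(0, θ)²` is the integral of its derivative, which is
at most `2 |u| |∂_σ u| + u² / 3`. Integrating over `θ` gives the trace inequality with `C = 2`. The
holes do not interfere, being discs centred on the line `σ = 0`: a point `(0, θ)` outside the open
discs only moves away from the centres as `σ` increases, so its whole segment lies in `Ω`.
-/

open Set
open scoped Topology InnerProductSpace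

section LocalBound

variable {𝕜 F G : Type*} [NontriviallyNormedField 𝕜] [NormedAddCommGroup F] [NormedSpace 𝕜 F]
  [NormedAddCommGroup G] [NormedSpace 𝕜 G] {f : F → G} {s : Set F}

/-- If `s` lacks unique derivatives at `x` (at a cusp, say), `fderivWithin 𝕜 f s` need not be
continuous there; but near `x` it agrees, at interior points of `s`, with a continuous choice of
derivative. -/
theorem exists_eventually_norm_fderivWithin_le {x : F} (hf : ContDiffWithinAt 𝕜 1 f s x) :
    ∃ M, ∀ᶠ y in 𝓝[s] x, y ∈ interior s → ‖fderivWithin 𝕜 f s y‖ ≤ M := by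
  obtain ⟨v, hv, -, f', hff', hf'⟩ :=
    (contDiffWithinAt_succ_iff_hasFDerivWithinAt (n := 0) (by simp)).1 (by simpa using hf)
  have hvs : v ∈ 𝓝[s] x := nhdsWithin_mono x (subset_insert x s) hv
  have hbound : ∀ᶠ y in 𝓝[s] x, ‖f' y‖ < ‖f' x‖ + 1 :=
    nhdsWithin_le_iff.2 hvs (hf'.continuousWithinAt.norm.eventually_lt_const (lt_add_one _))
  refine ⟨‖f' x‖ + 1, ?_⟩
  filter_upwards [hbound, hvs, eventually_mem_nhdsWithin_iff.2 hvs] with y hy hyv hvy hys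
  have hsy : s ∈ 𝓝 y := mem_interior_iff_mem_nhds.1 hys
  have hderiv : HasFDerivAt f (f' y) y :=
    (hff' y hyv).hasFDerivAt (by rwa [nhdsWithin_eq_nhds.2 hsy] at hvy)
  rw [fderivWithin_of_mem_nhds hsy, hderiv.fderiv]
  exact hy.le

theorem exists_norm_fderivWithin_le_of_isCompact (hs : IsCompact s) (hf : ContDiffOn 𝕜 1 f s) :
    ∃ M, ∀ y ∈ interior s, ‖fderivWithin 𝕜 f s y‖ ≤ M := by
  suffices h : ∃ M, ∀ y ∈ s, y ∈ interior s → ‖fderivWithin 𝕜 f s y‖ ≤ M from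
    h.imp fun M hM y hy => hM y (interior_subset hy) hy
  refine hs.induction_on (p := fun t => ∃ M, ∀ y ∈ t, y ∈ interior s →
    ‖fderivWithin 𝕜 f s y‖ ≤ M) ⟨0, by simp⟩ ?_ ?_ ?_
  · rintro t t' htt' ⟨M, hM⟩
    exact ⟨M, fun y hy => hM y (htt' hy)⟩
  · rintro t t' ⟨M, hM⟩ ⟨M', hM'⟩
    refine ⟨max M M', fun y hy hys => hy.elim (fun h => ?_) fun h => ?_⟩
    · exact (hM y h hys).trans (le_max_left _ _)
    · exact (hM' y h hys).trans (le_max_right _ _)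
  · intro x hx
    obtain ⟨M, hM⟩ := exists_eventually_norm_fderivWithin_le (hf x hx)
    exact ⟨_, hM, M, fun _ hy => hy⟩

theorem hasFDerivAt_fderivWithin_of_mem_interior (hf : DifferentiableOn 𝕜 f s) {x : F}
    (hx : x ∈ interior s) : HasFDerivAt f (fderivWithin 𝕜 f s x) x :=
  (hf x (interior_subset hx)).hasFDerivWithinAt.hasFDerivAt (mem_interior_iff_mem_nhds.1 hx)

theorem continuousOn_fderivWithin_interior (hf : ContDiffOn 𝕜 1 f s) :
    ContinuousOn (fderivWithin 𝕜 f s) (interior s) :=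
  ((hf.mono interior_subset).continuousOn_fderiv_of_isOpen isOpen_interior le_rfl).congr
    fun _ hx => fderivWithin_of_mem_nhds (mem_interior_iff_mem_nhds.1 hx)

end LocalBound

section Trace

variable {E : Type*} [NormedAddCommGroup E] [InnerProductSpace ℝ E] {a b : ℝ}

/-- One-dimensional divergence theorem for `‖f‖²` times the affine weight equal to `-1` at `a` and
vanishing at `b`. -/
theorem norm_sq_le_integral_of_hasDerivAt_of_le {f f' : ℝ → E} {φ : ℝ → ℝ} (hab : a < b)
    (hf : ContinuousOn f (Icc a b)) (hff' : ∀ x ∈ Ioo a b, HasDerivAt f (f' x) x)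
    (hφ : IntegrableOn φ (Ioo a b))
    (hle : ∀ x ∈ Ioo a b, 2 * (‖f x‖ * ‖f' x‖) + ‖f x‖ ^ 2 / (b - a) ≤ φ x) :
    ‖f a‖ ^ 2 ≤ ∫ x in Ioo a b, φ x := by
  have hba : 0 < b - a := sub_pos.2 hab
  have hcont : ContinuousOn (fun x => ‖f x‖ ^ 2 * ((x - b) / (b - a))) (Icc a b) :=
    (hf.norm.pow 2).mul (by fun_prop)
  have hderiv : ∀ x ∈ Ioo a b, HasDerivAt (fun x => ‖f x‖ ^ 2 * ((x - b) / (b - a)))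
      (2 * ⟪f x, f' x⟫_ℝ * ((x - b) / (b - a)) + ‖f x‖ ^ 2 * (1 / (b - a))) x := fun x hx =>
    (hff' x hx).norm_sq.mul (((hasDerivAt_id x).sub_const b).div_const (b - a))
  have hderiv_le : ∀ x ∈ Ioo a b,
      2 * ⟪f x, f' x⟫_ℝ * ((x - b) / (b - a)) + ‖f x‖ ^ 2 * (1 / (b - a)) ≤ φ x := by
    intro x hx
    have hweight : |(x - b) / (b - a)| ≤ 1 := by
      rw [abs_div, abs_of_pos hba, div_le_one hba, abs_of_neg (sub_neg.2 hx.2)]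
      linarith [hx.1]
    calc 2 * ⟪f x, f' x⟫_ℝ * ((x - b) / (b - a)) + ‖f x‖ ^ 2 * (1 / (b - a))
        ≤ 2 * (|⟪f x, f' x⟫_ℝ| * |(x - b) / (b - a)|) + ‖f x‖ ^ 2 / (b - a) := by
          rw [← abs_mul, mul_assoc, mul_one_div]
          gcongr
          exact le_abs_self _
      _ ≤ 2 * (‖f x‖ * ‖f' x‖ * 1) + ‖f x‖ ^ 2 / (b - a) := by
          gcongr
          exact abs_real_inner_le_norm _ _
      _ ≤ φ x := by simpa only [mul_one] using hle x hx
  have hftc := intervalIntegral.sub_le_integral_of_hasDeriv_right_of_le hab.le hcont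
    (fun x hx => (hderiv x hx).hasDerivWithinAt) ((integrableOn_Icc_iff_integrableOn_Ioo ..).2 hφ)
    hderiv_le
  rw [intervalIntegral.integral_of_le hab.le, integral_Ioc_eq_integral_Ioo] at hftc
  have hweight_left : (a - b) / (b - a) = -1 := by rw [div_eq_iff hba.ne']; ring
  simpa [hweight_left] using hftc

theorem integral_norm_sq_le_integral_prod_of_hasDerivAt_of_le {Y : Type*} [MeasurableSpace Y]
    {ν : Measure Y} [SFinite ν] {u u' : ℝ × Y → E} {φ : ℝ × Y → ℝ} (hab : a < b)
    (hu : ∀ᵐ y ∂ν, ContinuousOn (fun x => u (x, y)) (Icc a b))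
    (huu' : ∀ᵐ y ∂ν, ∀ x ∈ Ioo a b, HasDerivAt (fun x => u (x, y)) (u' (x, y)) x)
    (hφ : Integrable φ ((volume.restrict (Ioo a b)).prod ν))
    (hle : ∀ᵐ y ∂ν, ∀ x ∈ Ioo a b,
      2 * (‖u (x, y)‖ * ‖u' (x, y)‖) + ‖u (x, y)‖ ^ 2 / (b - a) ≤ φ (x, y)) :
    ∫ y, ‖u (a, y)‖ ^ 2 ∂ν ≤ ∫ p, φ p ∂((volume.restrict (Ioo a b)).prod ν) := by
  rw [integral_prod_symm φ hφ]
  refine integral_mono_of_nonneg (ae_of_all _ fun y => sq_nonneg _) hφ.integral_prod_right ?_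
  filter_upwards [hu, huu', hle, hφ.prod_left_ae] with y hcont hderiv hbound hint
  exact norm_sq_le_integral_of_hasDerivAt_of_le hab hcont hderiv hint hbound

/-- The integrand `|u| |∇u| + |u|²` of the trace inequality, where `|∇u|` is the Euclidean
(for vector-valued `u`: Frobenius) norm of the gradient and derivatives are taken within `s`. -/
noncomputable def traceDensity (u : ℝ × ℝ → E) (s : Set (ℝ × ℝ)) (p : ℝ × ℝ) : ℝ :=
  ‖u p‖ * √(‖fderivWithin ℝ u s p (1, 0)‖ ^ 2 + ‖fderivWithin ℝ u s p (0, 1)‖ ^ 2) + ‖u p‖ ^ 2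

variable {u : ℝ × ℝ → E} {s Ω : Set (ℝ × ℝ)}

theorem traceDensity_nonneg (u : ℝ × ℝ → E) (s : Set (ℝ × ℝ)) (p : ℝ × ℝ) :
    0 ≤ traceDensity u s p := by
  unfold traceDensity
  positivity

theorem two_mul_norm_mul_norm_add_le_traceDensity (u : ℝ × ℝ → E) (s : Set (ℝ × ℝ)) (p : ℝ × ℝ)
    (c : ℝ) :
    2 * (‖u p‖ * ‖fderivWithin ℝ u s p (1, 0)‖) + ‖u p‖ ^ 2 / c ≤
      max 2 c⁻¹ * traceDensity u s p := by
  have hpartial : ‖fderivWithin ℝ u s p (1, 0)‖ ≤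
      √(‖fderivWithin ℝ u s p (1, 0)‖ ^ 2 + ‖fderivWithin ℝ u s p (0, 1)‖ ^ 2) :=
    Real.le_sqrt_of_sq_le (le_add_of_nonneg_right (sq_nonneg _))
  rw [traceDensity, mul_add, div_eq_inv_mul]
  gcongr
  · exact le_max_left _ _
  · exact le_max_right _ _

theorem continuousOn_traceDensity (hu : ContDiffOn ℝ 1 u s) :
    ContinuousOn (traceDensity u s) (interior s) := by
  have hu₀ : ContinuousOn u (interior s) := hu.continuousOn.mono interior_subset
  have hu' (v : ℝ × ℝ) : ContinuousOn (fun p => fderivWithin ℝ u s p v) (interior s) :=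
    (continuousOn_fderivWithin_interior hu).clm_apply continuousOn_const
  exact (hu₀.norm.mul (((hu' _).norm.pow 2).add ((hu' _).norm.pow 2)).sqrt).add (hu₀.norm.pow 2)

theorem exists_traceDensity_le_of_isCompact (hs : IsCompact s) (hu : ContDiffOn ℝ 1 u s) :
    ∃ M, ∀ p ∈ interior s, traceDensity u s p ≤ M := by
  obtain ⟨K, hK⟩ := hs.exists_bound_of_continuousOn hu.continuousOn
  obtain ⟨M, hM⟩ := exists_norm_fderivWithin_le_of_isCompact hs hu
  refine ⟨K * √(M ^ 2 + M ^ 2) + K ^ 2, fun p hp => ?_⟩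
  have huK : ‖u p‖ ≤ K := hK p (interior_subset hp)
  have hK₀ : 0 ≤ K := (norm_nonneg _).trans huK
  have hpartial {v : ℝ × ℝ} (hv : ‖v‖ ≤ 1) : ‖fderivWithin ℝ u s p v‖ ≤ M :=
    ((fderivWithin ℝ u s p).unit_le_opNorm v hv).trans (hM p hp)
  have h₁ : ‖fderivWithin ℝ u s p (1, 0)‖ ≤ M := hpartial (by simp [Prod.norm_def])
  have h₂ : ‖fderivWithin ℝ u s p (0, 1)‖ ≤ M := hpartial (by simp [Prod.norm_def])
  unfold traceDensity
  gcongr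

theorem integrableOn_traceDensity_interior (hs : IsCompact s) (hu : ContDiffOn ℝ 1 u s) :
    IntegrableOn (traceDensity u s) (interior s) := by
  obtain ⟨M, hM⟩ := exists_traceDensity_le_of_isCompact hs hu
  refine ⟨(continuousOn_traceDensity hu).aestronglyMeasurable measurableSet_interior,
    .restrict_of_bounded (C := M) ((measure_mono interior_subset).trans_lt hs.measure_lt_top) ?_⟩
  filter_upwards [ae_restrict_mem measurableSet_interior] with p hp
  rw [Real.norm_of_nonneg (traceDensity_nonneg u s p)]
  exact hM p hp

theorem setIntegral_norm_sq_le_setIntegral_traceDensity {T : Set ℝ} (hab : a < b)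
    (hs : IsCompact s) (hu : ContDiffOn ℝ 1 u s) (hΩ : Ω ⊆ interior s) (hT : MeasurableSet T)
    (hTΩ : Ioo a b ×ˢ T ⊆ Ω) :
    ∫ θ in T, ‖u (a, θ)‖ ^ 2 ≤ max 2 (b - a)⁻¹ * ∫ p in Ω, traceDensity u s p := by
  have hslice : ∀ θ ∈ T, ∀ σ ∈ Ioo a b, (σ, θ) ∈ interior s := fun θ hθ σ hσ => hΩ (hTΩ ⟨hσ, hθ⟩)
  have hslice_Icc : ∀ θ ∈ T, ∀ σ ∈ Icc a b, (σ, θ) ∈ s := by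
    intro θ hθ σ hσ
    rw [← closure_Ioo hab.ne] at hσ
    rw [← hs.isClosed.closure_eq]
    exact map_mem_closure (f := fun σ => (σ, θ)) (by fun_prop) hσ
      fun σ' hσ' => interior_subset (hslice θ hθ σ' hσ')
  have hint : IntegrableOn (traceDensity u s) Ω :=
    (integrableOn_traceDensity_interior hs hu).mono_set hΩ
  have hprod : (volume.restrict (Ioo a b)).prod (volume.restrict T) =
      (volume : Measure (ℝ × ℝ)).restrict (Ioo a b ×ˢ T) := Measure.prod_restrict _ _
  calc ∫ θ in T, ‖u (a, θ)‖ ^ 2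
      ≤ ∫ p in Ioo a b ×ˢ T, max 2 (b - a)⁻¹ * traceDensity u s p := by
        rw [← hprod]
        refine integral_norm_sq_le_integral_prod_of_hasDerivAt_of_le
          (u' := fun p => fderivWithin ℝ u s p (1, 0)) hab ?_ ?_ ?_
          (ae_of_all _ fun θ σ _ => two_mul_norm_mul_norm_add_le_traceDensity u s (σ, θ) (b - a))
        · filter_upwards [ae_restrict_mem hT] with θ hθ
          exact hu.continuousOn.comp (by fun_prop) (hslice_Icc θ hθ)
        · filter_upwards [ae_restrict_mem hT] with θ hθ σ hσ
          exact (hasFDerivAt_fderivWithin_of_mem_interior (hu.differentiableOn one_ne_zero)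
            (hslice θ hθ σ hσ)).comp_hasDerivAt σ ((hasDerivAt_id σ).prodMk (hasDerivAt_const σ θ))
        · rw [hprod]
          exact (hint.mono_set hTΩ).const_mul _
    _ = max 2 (b - a)⁻¹ * ∫ p in Ioo a b ×ˢ T, traceDensity u s p := integral_const_mul _ _
    _ ≤ max 2 (b - a)⁻¹ * ∫ p in Ω, traceDensity u s p := by
        gcongr
        exact ae_of_all _ (traceDensity_nonneg u s)

end Trace

section Geometry

theorem closure_sdiff_setOf_le_subset {X α : Type*} [TopologicalSpace X] [TopologicalSpace α]
    [LinearOrder α] [OrderClosedTopology α] {f : X → α} (hf : Continuous f) (s : Set X) (c : α) :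
    closure (s \ {x | f x ≤ c}) ⊆ {x | c ≤ f x} :=
  closure_minimal (fun _ hx => (not_le.1 hx.2).le) (isClosed_le continuous_const hf)

variable {r σ θ : ℝ}

theorem isOpen_OmegaR (r : ℝ) : IsOpen (OmegaR r) :=
  (isOpen_Ioo.prod isOpen_Ioo).sdiff (isClosed_le (by fun_prop) (by fun_prop))

theorem isOpen_OmegaRR (r : ℝ) : IsOpen (OmegaRR r) :=
  (isOpen_OmegaR r).sdiff (isClosed_le (by fun_prop) (by fun_prop))

theorem OmegaRR_subset_OmegaR (r : ℝ) : OmegaRR r ⊆ OmegaR r :=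
  sdiff_subset

theorem isBounded_OmegaR (r : ℝ) : Bornology.IsBounded (OmegaR r) :=
  ((Metric.isBounded_Ioo _ _).prod (Metric.isBounded_Ioo _ _)).subset sdiff_subset

theorem mk_mem_OmegaR_of_mk_zero_mem_closure (hσ : σ ∈ Ioo 0 3)
    (hθ : θ ∈ Ioo (-(Real.pi / 2)) (Real.pi / 2)) (h : (0, θ) ∈ closure (OmegaR r)) :
    (σ, θ) ∈ OmegaR r := by
  have hdist : r ^ 2 ≤ (0 : ℝ) ^ 2 + (θ - Real.pi / 2) ^ 2 :=
    closure_sdiff_setOf_le_subset (by fun_prop) _ _ h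
  refine ⟨⟨hσ, hθ⟩, not_le.2 (hdist.trans_lt ?_)⟩
  gcongr
  exact hσ.1

theorem mk_mem_OmegaRR_of_mk_zero_mem_closure (hσ : σ ∈ Ioo 0 3)
    (hθ : θ ∈ Ioo (-(Real.pi / 2)) (Real.pi / 2)) (h : (0, θ) ∈ closure (OmegaRR r)) :
    (σ, θ) ∈ OmegaRR r := by
  have hdist : r ^ 2 ≤ (0 : ℝ) ^ 2 + (θ + Real.pi / 2) ^ 2 :=
    closure_sdiff_setOf_le_subset (by fun_prop) _ _ h
  refine ⟨mk_mem_OmegaR_of_mk_zero_mem_closure hσ hθ (closure_mono (OmegaRR_subset_OmegaR r) h),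
    not_le.2 (hdist.trans_lt ?_)⟩
  gcongr
  exact hσ.1

/-- The part of the left edge of `Rrect` lying on `∂Ω`, parametrized by the coordinate `θ`. -/
def leftEdge (Ω : Set (ℝ × ℝ)) : Set ℝ :=
  {θ | θ ∈ Ioo (-(Real.pi / 2)) (Real.pi / 2) ∧ (0, θ) ∈ frontier Ω}

theorem measurableSet_leftEdge (Ω : Set (ℝ × ℝ)) : MeasurableSet (leftEdge Ω) :=
  measurableSet_Ioo.inter (measurable_prodMk_left isClosed_frontier.measurableSet)

theorem Ioo_prod_leftEdge_OmegaR_subset (r : ℝ) :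
    Ioo 0 3 ×ˢ leftEdge (OmegaR r) ⊆ OmegaR r := fun _ h =>
  mk_mem_OmegaR_of_mk_zero_mem_closure h.1 h.2.1 (frontier_subset_closure h.2.2)

theorem Ioo_prod_leftEdge_OmegaRR_subset (r : ℝ) :
    Ioo 0 3 ×ˢ leftEdge (OmegaRR r) ⊆ OmegaRR r := fun _ h =>
  mk_mem_OmegaRR_of_mk_zero_mem_closure h.1 h.2.1 (frontier_subset_closure h.2.2)

theorem setIntegral_leftEdge_norm_sq_le {E : Type*} [NormedAddCommGroup E] [InnerProductSpace ℝ E]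
    {Ω : Set (ℝ × ℝ)} (hopen : IsOpen Ω) (hbounded : Bornology.IsBounded Ω)
    (hslices : Ioo 0 3 ×ˢ leftEdge Ω ⊆ Ω) {u : ℝ × ℝ → E} (hu : ContDiffOn ℝ 1 u (closure Ω)) :
    ∫ θ in leftEdge Ω, ‖u (0, θ)‖ ^ 2 ≤ 2 * ∫ p in Ω, traceDensity u (closure Ω) p := by
  have hconst : max 2 ((3 : ℝ) - 0)⁻¹ = 2 := by norm_num
  simpa only [hconst] using setIntegral_norm_sq_le_setIntegral_traceDensity three_pos
    hbounded.isCompact_closure hu hopen.subset_interior_closure (measurableSet_leftEdge Ω) hslices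

end Geometry

theorem trace_inequality_perforated_rectangles_general {E : Type*} [NormedAddCommGroup E]
    [InnerProductSpace ℝ E] {r : ℝ} {Ω : Set (ℝ × ℝ)} (hΩ : Ω = OmegaR r ∨ Ω = OmegaRR r)
    {u : ℝ × ℝ → E} (hu : ContDiffOn ℝ 1 u (closure Ω)) :
    ∫ θ in leftEdge Ω, ‖u (0, θ)‖ ^ 2 ≤ 2 * ∫ p in Ω, traceDensity u (closure Ω) p := by
  rcases hΩ with rfl | rfl
  · exact setIntegral_leftEdge_norm_sq_le (isOpen_OmegaR r) (isBounded_OmegaR r)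
      (Ioo_prod_leftEdge_OmegaR_subset r) hu
  · exact setIntegral_leftEdge_norm_sq_le (isOpen_OmegaRR r)
      ((isBounded_OmegaR r).subset (OmegaRR_subset_OmegaR r))
      (Ioo_prod_leftEdge_OmegaRR_subset r) hu

/-- **Partial trace inequality on the perforated rectangles** (Lemma C.4 of the paper):
there is a constant `C > 0`, independent of `r`, such that for every `0 < r < π/2`, each
`Ω ∈ {Ω_r, Ω_{r,r}}`, and every `C¹` function `u` on the closure of `Ω`, the integral of
`u(0,θ)²` over those `θ ∈ (-π/2, π/2)` with `(0,θ) ∈ ∂Ω` is bounded by `C` times the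
integral over `Ω` of `|u|·|∇u| + u²`, with `|∇u|` the Euclidean gradient norm. -/
theorem trace_inequality_perforated_rectangles :
    ∃ C : ℝ, 0 < C ∧ ∀ r : ℝ, 0 < r → r < Real.pi / 2 → ∀ Ω : Set (ℝ × ℝ),
      (Ω = OmegaR r ∨ Ω = OmegaRR r) → ∀ u : ℝ × ℝ → ℝ,
      ContDiffOn ℝ 1 u (closure Ω) →
      (∫ θ in {θ : ℝ | θ ∈ Set.Ioo (-(Real.pi / 2)) (Real.pi / 2) ∧
            ((0 : ℝ), θ) ∈ frontier Ω},
          (u (0, θ)) ^ 2) ≤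
        C * ∫ p in Ω,
            (|u p| *
                Real.sqrt ((fderivWithin ℝ u (closure Ω) p (1, 0)) ^ 2 +
                  (fderivWithin ℝ u (closure Ω) p (0, 1)) ^ 2) +
              (u p) ^ 2) :=
  ⟨2, two_pos, fun r _ _ Ω hΩ u hu => by
    simpa only [leftEdge, traceDensity, Real.norm_eq_abs, sq_abs] using
      trace_inequality_perforated_rectangles_general hΩ hu⟩
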